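/- There exist families of ML-formulae (ψ_i)_{i∈ℕ} and (ψ'_i)_{i∈ℕ} such that: (1) the sizes of ψ_i and ψ'_i are polynomial in i; (2) sig(ψ_i) = {a, b_0, …, b_{i−1}} and sig(ψ'_i) = {a, c}; (3) for every i ∈ ℕ, all M, M' ∈ T^3 with M ⊨ ψ_i and M' ⊨ ψ'_i, every signature τ with a ∈ τ and {c, b_0, …, b_{i−1}} ∩ τ = ∅, and every (τ,ℓ)-bisimulation Z witnessing M ≈^ℓ_τ M' for some ℓ ≥ i, there are points w_0, …, w_{2^i−1} at depth i in M and a point ŵ at depth i in M' such that (a) (w_j, ŵ) ∈ Z for all j, (b) all w_j and ŵ satisfy a, and (c) any two distinct w_j, w_k are distinguished by some proposition among b_0, …, b_{i−1}. -/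

import Mathlib

/-- Formulae of the modal μ-calculus (in negation normal form). -/
inductive Form : Type
  | pos : ℕ → Form
  | neg : ℕ → Form
  | or  : Form → Form → Form
  | and : Form → Form → Form
  | dia : Form → Form
  | box : Form → Form
  | var : ℕ → Form
  | mu  : ℕ → Form → Form
  | nu  : ℕ → Form → Form

namespace Form

/-- Fixpoint-free formulae: modal logic ML. -/
def IsML : Form → Prop
  | pos _ => True
  | neg _ => True
  | or φ ψ => IsML φ ∧ IsML ψ
  | and φ ψ => IsML φ ∧ IsML ψ
  | dia φ => IsML φ
  | box φ => IsML φ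
  | var _ => False
  | mu _ _ => False
  | nu _ _ => False

/-- Modal depth: maximal nesting of ◇ and □. -/
def depth : Form → ℕ
  | pos _ => 0
  | neg _ => 0
  | or φ ψ => max φ.depth ψ.depth
  | and φ ψ => max φ.depth ψ.depth
  | dia φ => φ.depth + 1
  | box φ => φ.depth + 1
  | var _ => 0
  | mu _ φ => φ.depth
  | nu _ φ => φ.depth

/-- The set of propositions occurring in a formula. -/
def sig : Form → Set ℕ
  | pos p => {p}
  | neg p => {p}
  | or φ ψ => φ.sig ∪ ψ.sig
  | and φ ψ => φ.sig ∪ ψ.sig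
  | dia φ => φ.sig
  | box φ => φ.sig
  | var _ => ∅
  | mu _ φ => φ.sig
  | nu _ φ => φ.sig

/-- The size of a formula (its length as a string, up to a constant factor). -/
def size : Form → ℕ
  | pos _ => 1
  | neg _ => 2
  | or φ ψ => φ.size + ψ.size + 1
  | and φ ψ => φ.size + ψ.size + 1
  | dia φ => φ.size + 1
  | box φ => φ.size + 1
  | var _ => 1
  | mu _ φ => φ.size + 2
  | nu _ φ => φ.size + 2

end Form

/-- A set has at least `g` elements. -/
def AtLeastCard {W : Type} (g : ℕ) (S : Set W) : Prop :=
  ∃ f : Fin g → W, Function.Injective f ∧ ∀ i, f i ∈ S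

/-- Pointed Kripke structures. -/
structure Model : Type 1 where
  W : Type
  root : W
  R : W → W → Prop
  val : W → ℕ → Prop

namespace Model

/-- Semantics of the μ-calculus, via Knaster–Tarski style clauses. -/
def interp (M : Model) : Form → (ℕ → Set M.W) → Set M.W
  | .pos p, _ => {w | M.val w p}
  | .neg p, _ => {w | ¬ M.val w p}
  | .or φ ψ, e => M.interp φ e ∪ M.interp ψ e
  | .and φ ψ, e => M.interp φ e ∩ M.interp ψ e
  | .dia φ, e => {w | ∃ v, M.R w v ∧ v ∈ M.interp φ e}
  | .box φ, e => {w | ∀ v, M.R w v → v ∈ M.interp φ e}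
  | .var x, e => e x
  | .mu x φ, e => sInf {S : Set M.W | M.interp φ (Function.update e x S) ⊆ S}
  | .nu x φ, e => sSup {S : Set M.W | S ⊆ M.interp φ (Function.update e x S)}

/-- `M ⊨ φ`: the root of `M` satisfies `φ`. -/
def Sat (M : Model) (φ : Form) : Prop := M.root ∈ M.interp φ fun _ => ∅

/-- Points reachable from the root in exactly `k` steps (in a tree: points of depth `k`). -/
def stepsTo (M : Model) : ℕ → M.W → Prop
  | 0, w => w = M.root
  | (k+1), w => ∃ v, M.stepsTo k v ∧ M.R v w

/-- Membership in the `n`-prefix: depth at most `n`. -/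
def InPrefix (M : Model) (n : ℕ) (w : M.W) : Prop := ∃ k ≤ n, M.stepsTo k w

/-- Tree models: every point is reachable from the root, the root has no predecessor,
and every point has at most one predecessor. -/
def IsTree (M : Model) : Prop :=
  (∀ w, Relation.ReflTransGen M.R M.root w) ∧
  (∀ w, ¬ M.R w M.root) ∧
  (∀ w v v', M.R v w → M.R v' w → v = v')

/-- Outdegree at most `d`. -/
def outdegLE (M : Model) (d : ℕ) : Prop :=
  ∀ w, ¬ AtLeastCard (d+1) {v | M.R w v}

end Model

/-- The class `T^d` of all tree models of outdegree at most `d`. -/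
def TreeC (d : ℕ) : Set Model := {M | M.IsTree ∧ M.outdegLE d}

/-- `(σ,n)`-bisimulations: bisimulations between the `n`-prefixes of the `σ`-reducts,
relating only points of equal depth and linking the roots. -/
structure IsNBisim (M M' : Model) (σ : Set ℕ) (n : ℕ) (Z : M.W → M'.W → Prop) : Prop where
  root : Z M.root M'.root
  depthEq : ∀ ⦃w w'⦄, Z w w' → ∃ k ≤ n, M.stepsTo k w ∧ M'.stepsTo k w'
  base : ∀ ⦃w w'⦄, Z w w' → ∀ p ∈ σ, (M.val w p ↔ M'.val w' p)
  forth : ∀ ⦃w w'⦄, Z w w' → ∀ k, k < n → M.stepsTo k w →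
      ∀ v, M.R w v → ∃ v', M'.R w' v' ∧ Z v v'
  back : ∀ ⦃w w'⦄, Z w w' → ∀ k, k < n → M'.stepsTo k w' →
      ∀ v', M'.R w' v' → ∃ v, M.R w v ∧ Z v v'

/-- `(σ,n)`-isomorphisms: `(σ,n)`-bisimulations bijective on the `n`-prefixes. -/
def IsNIso (M M' : Model) (σ : Set ℕ) (n : ℕ) (Z : M.W → M'.W → Prop) : Prop :=
  IsNBisim M M' σ n Z ∧
  (∀ w w₁' w₂', Z w w₁' → Z w w₂' → w₁' = w₂') ∧
  (∀ w₁ w₂ w', Z w₁ w' → Z w₂ w' → w₁ = w₂) ∧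
  (∀ w, M.InPrefix n w → ∃ w', Z w w') ∧
  (∀ w', M'.InPrefix n w' → ∃ w, Z w w')

/-- `M ≈ⁿ_σ M'`. -/
def NBisimEq (M M' : Model) (σ : Set ℕ) (n : ℕ) : Prop := ∃ Z, IsNBisim M M' σ n Z

/-- `M ≅ⁿ_σ M'`. -/
def NIsoEq (M M' : Model) (σ : Set ℕ) (n : ℕ) : Prop := ∃ Z, IsNIso M M' σ n Z

/-- `ψ` separates `φ` from `φ'` over the class `C`: `φ ⊨ ψ` and `ψ ⊨ ¬φ'` over `C`. -/
def Separates (C : Set Model) (ψ φ φ' : Form) : Prop :=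
  (∀ M ∈ C, M.Sat φ → M.Sat ψ) ∧ (∀ M ∈ C, M.Sat ψ → ¬ M.Sat φ')

namespace Form

/-- `n` nested boxes in front of a formula. -/
def boxes : ℕ → Form → Form
  | 0, φ => φ
  | n + 1, φ => box (boxes n φ)

/-- A binary tree of height `n` inside the proposition `0`, whose branching at level `m` is
recorded by the proposition `m + 2` at the leaves; the levels are numbered from `j`. -/
def branching : ℕ → ℕ → Form
  | 0, _ => or (pos 0) (neg 0)
  | n + 1, j =>
    and (and (dia (and (pos 0) (boxes n (pos (j + 2)))))
             (dia (and (pos 0) (boxes n (neg (j + 2))))))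
      (box (branching n (j + 1)))

/-- For `n` levels, every point has a successor satisfying `0` and two distinct ones
violating `0`, told apart by the proposition `1`. -/
def crowding : ℕ → Form
  | 0 => or (pos 1) (neg 1)
  | n + 1 =>
    and (and (dia (pos 0)) (and (dia (and (neg 0) (pos 1))) (dia (and (neg 0) (neg 1)))))
      (box (crowding n))

theorem isML_boxes {φ : Form} (h : φ.IsML) : ∀ n, (boxes n φ).IsML
  | 0 => h
  | n + 1 => isML_boxes h n

theorem size_boxes (φ : Form) : ∀ n, (boxes n φ).size = φ.size + n
  | 0 => rfl
  | n + 1 => by simp [boxes, size, size_boxes φ n, Nat.add_assoc]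

theorem sig_boxes (φ : Form) : ∀ n, (boxes n φ).sig = φ.sig
  | 0 => rfl
  | n + 1 => sig_boxes φ n

theorem isML_branching : ∀ n j, (branching n j).IsML
  | 0, _ => ⟨trivial, trivial⟩
  | n + 1, j =>
    ⟨⟨⟨trivial, isML_boxes (φ := pos (j + 2)) trivial n⟩,
      ⟨trivial, isML_boxes (φ := neg (j + 2)) trivial n⟩⟩, isML_branching n (j + 1)⟩

theorem isML_crowding : ∀ n, (crowding n).IsML
  | 0 => ⟨trivial, trivial⟩
  | n + 1 => ⟨⟨trivial, ⟨trivial, trivial⟩, trivial, trivial⟩, isML_crowding n⟩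

theorem size_branching_le : ∀ n j, (branching n j).size ≤ 10 * (n + 1) ^ 2
  | 0, _ => by simp [branching, size]
  | n + 1, j => by
    have ih := size_branching_le n (j + 1)
    simp only [branching, size, size_boxes]
    nlinarith

theorem size_crowding_le : ∀ n, (crowding n).size ≤ 20 * (n + 1)
  | 0 => by simp [crowding, size]
  | n + 1 => by
    have ih := size_crowding_le n
    simp only [crowding, size]
    omega

theorem sig_branching :
    ∀ n j, (branching n j).sig = ({0} : Set ℕ) ∪ {q | ∃ m, j ≤ m ∧ m < j + n ∧ q = m + 2}
  | 0, j => by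
    ext q
    simp only [branching, sig, Set.mem_union, Set.mem_singleton_iff, Set.mem_ofPred_eq]
    grind
  | n + 1, j => by
    ext q
    simp only [branching, sig, sig_boxes, sig_branching n (j + 1), Set.mem_union,
      Set.mem_singleton_iff, Set.mem_ofPred_eq]
    constructor
    · rintro (((h | h) | (h | h)) | (h | ⟨m, h₁, h₂, h⟩))
      · exact .inl h
      · exact .inr ⟨j, by omega, by omega, h⟩
      · exact .inl h
      · exact .inr ⟨j, by omega, by omega, h⟩
      · exact .inl h
      · exact .inr ⟨m, by omega, by omega, h⟩
    · rintro (h | ⟨m, h₁, h₂, h⟩)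
      · exact .inr (.inl h)
      · rcases h₁.eq_or_lt with rfl | h₁
        · exact .inl (.inl (.inr h))
        · exact .inr (.inr ⟨m, by omega, by omega, h⟩)

theorem sig_crowding_subset : ∀ n, (crowding n).sig ⊆ ({0, 1} : Set ℕ)
  | 0 => by simp [crowding, sig]
  | n + 1 => by simp [crowding, sig, sig_crowding_subset n, Set.insert_subset_iff]

theorem one_mem_sig_crowding : ∀ n, 1 ∈ (crowding n).sig
  | 0 => by simp [crowding, sig]
  | n + 1 => by simp [crowding, sig]

end Form

namespace Model

/-- With at most three successors, two of them distinct and violating `p`, at most one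
successor satisfies `p`. -/
theorem succ_unique_of_outdegLE {M : Model} (hM : M.outdegLE 3) {p q : ℕ} {w x y u v : M.W}
    (hx : M.R w x) (hxp : ¬ M.val x p) (hxq : M.val x q)
    (hy : M.R w y) (hyp : ¬ M.val y p) (hyq : ¬ M.val y q)
    (hu : M.R w u) (hup : M.val u p) (hv : M.R w v) (hvp : M.val v p) : u = v := by
  by_contra huv
  have hxy : x ≠ y := fun h => hyq (h ▸ hxq)
  have hux : u ≠ x := fun h => hxp (h ▸ hup)
  have huy : u ≠ y := fun h => hyp (h ▸ hup)
  have hvx : v ≠ x := fun h => hxp (h ▸ hvp)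
  have hvy : v ≠ y := fun h => hyp (h ▸ hvp)
  refine hM w ⟨![u, v, x, y], ?_, ?_⟩
  · intro i j hij
    fin_cases i <;> fin_cases j <;> simp_all
  · intro i
    fin_cases i <;> simp [hu, hv, hx, hy]

end Model

/-- Below a point `w'` satisfying `crowding n` there is a single point that is related to
`2 ^ n` descendants, with all patterns of the branching propositions, of any point related to `w'`
satisfying `branching n j`. -/
theorem exists_common_bisimilar_leaf {M M' : Model} (hM' : M'.outdegLE 3) {τ : Set ℕ} (ha : 0 ∈ τ)
    {l : ℕ} {Z : M.W → M'.W → Prop} (hZ : IsNBisim M M' τ l Z) (e : ℕ → Set M.W)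
    (e' : ℕ → Set M'.W) (n : ℕ) : ∀ (j k : ℕ) (w' : M'.W), k + n ≤ l → M'.stepsTo k w' →
      M'.val w' 0 → w' ∈ M'.interp (.crowding n) e' →
      ∃ v', M'.stepsTo (k + n) v' ∧ M'.val v' 0 ∧
        ∀ w, Z w w' → M.stepsTo k w → w ∈ M.interp (.branching n j) e → ∀ s : ℕ → Bool,
          ∃ v, M.stepsTo (k + n) v ∧ Z v v' ∧
            (∀ φ, w ∈ M.interp (.boxes n φ) e → v ∈ M.interp φ e) ∧
            ∀ m, j ≤ m → m < j + n → (M.val v (m + 2) ↔ s m = true) := by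
  induction n with
  | zero =>
    intro j k w' _ hk hw' _
    exact ⟨w', hk, hw', fun w hw hkw _ _ => ⟨w, hkw, hw, fun _ h => h, fun m _ _ => by omega⟩⟩
  | succ n ih =>
    rintro j k w' hl hk - ⟨⟨⟨u', hu', hu'0⟩, ⟨x, hx, hx0, hx1⟩, ⟨y, hy, hy0, hy1⟩⟩, hbox'⟩
    obtain ⟨v', hv', hv'0, H⟩ :=
      ih (j + 1) (k + 1) u' (by omega) ⟨w', hk, hu'⟩ hu'0 (hbox' u' hu')
    have hkn : k + 1 + n = k + (n + 1) := by omega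
    rw [hkn] at hv' H
    refine ⟨v', hv', hv'0, ?_⟩
    rintro w hw hkw ⟨⟨⟨u₁, hu₁, hu₁0, hu₁b⟩, ⟨u₂, hu₂, hu₂0, hu₂b⟩⟩, hbox⟩ s
    have related : ∀ u, M.R w u → M.val u 0 → Z u u' := by
      intro u hu hu0
      obtain ⟨t, ht, hut⟩ := hZ.forth hw k (by omega) hkw u hu
      have ht0 : M'.val t 0 := (hZ.base hut 0 ha).1 hu0
      rwa [M'.succ_unique_of_outdegLE hM' hx hx0 hx1 hy hy0 hy1 hu' hu'0 ht ht0]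
    have leaf : ∀ u, M.R w u → M.val u 0 →
        (∀ v, (∀ φ, u ∈ M.interp (.boxes n φ) e → v ∈ M.interp φ e) →
          (M.val v (j + 2) ↔ s j = true)) →
        ∃ v, M.stepsTo (k + (n + 1)) v ∧ Z v v' ∧
          (∀ φ, w ∈ M.interp (.boxes (n + 1) φ) e → v ∈ M.interp φ e) ∧
          ∀ m, j ≤ m → m < j + (n + 1) → (M.val v (m + 2) ↔ s m = true) := by
      intro u hu hu0 hb
      obtain ⟨v, hv, hvv', hφ, hs⟩ :=
        H u (related u hu hu0) ⟨w, hkw, hu⟩ (hbox u hu) s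
      refine ⟨v, hv, hvv', fun φ h => hφ φ (h u hu), fun m h₁ h₂ => ?_⟩
      rcases h₁.eq_or_lt with rfl | h₁
      · exact hb v hφ
      · exact hs m h₁ (by omega)
    cases hsj : s j with
    | true =>
      refine leaf u₁ hu₁ hu₁0 fun v hv => ?_
      have h : M.val v (j + 2) := hv _ hu₁b
      simp [h, hsj]
    | false =>
      refine leaf u₂ hu₂ hu₂0 fun v hv => ?_
      have h : ¬ M.val v (j + 2) := hv _ hu₂b
      simp [h, hsj]

/-- the gadget formulae `ψ_i, ψ'_i` (with `a = 0`, `c = 1`, `b_j = j + 2`):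
polynomial size, the prescribed signatures, and the synchronizing property (3). -/
theorem stmt_11 :
    ∃ ψs ψs' : ℕ → Form,
      (∀ i, (ψs i).IsML ∧ (ψs' i).IsML) ∧
      (∃ c : ℕ, ∀ i, (ψs i).size ≤ c * (i + 1) ^ c ∧ (ψs' i).size ≤ c * (i + 1) ^ c) ∧
      (∀ i, (ψs i).sig = ({0} : Set ℕ) ∪ {q | ∃ j < i, q = j + 2}) ∧
      (∀ i, (ψs' i).sig = ({0, 1} : Set ℕ)) ∧
      (∀ i : ℕ, ∀ M M' : Model, M ∈ TreeC 3 → M' ∈ TreeC 3 →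
        M.Sat (ψs i) → M'.Sat (ψs' i) →
        ∀ τ : Set ℕ, 0 ∈ τ → (1 : ℕ) ∉ τ → (∀ j < i, (j + 2 : ℕ) ∉ τ) →
        ∀ ℓ, i ≤ ℓ → ∀ Z, IsNBisim M M' τ ℓ Z →
        ∃ w : Fin (2 ^ i) → M.W, ∃ what : M'.W,
          (∀ j, M.stepsTo i (w j)) ∧ M'.stepsTo i what ∧
          (∀ j, Z (w j) what) ∧
          (∀ j, M.val (w j) 0) ∧ M'.val what 0 ∧
          (∀ j k, j ≠ k →
            ∃ p, (∃ m, m < i ∧ p = m + 2) ∧ ¬ (M.val (w j) p ↔ M.val (w k) p))) := by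
  refine ⟨fun i => .and (.pos 0) (.branching i 0), fun i => .and (.pos 0) (.crowding i),
    fun i => ⟨⟨trivial, Form.isML_branching i 0⟩, ⟨trivial, Form.isML_crowding i⟩⟩,
    ⟨22, fun i => ?_⟩, fun i => ?_, fun i => ?_, ?_⟩
  · have h₁ := Form.size_branching_le i 0
    have h₂ := Form.size_crowding_le i
    have h₃ : (i + 1) ^ 2 ≤ (i + 1) ^ 22 := Nat.pow_le_pow_right (by omega) (by norm_num)
    have h₄ : i + 1 ≤ (i + 1) ^ 22 := Nat.le_self_pow (by norm_num) _
    simp only [Form.size]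
    constructor <;> omega
  · simp [Form.sig, Form.sig_branching]
  · have h₁ := Form.sig_crowding_subset i
    have h₂ := Form.one_mem_sig_crowding i
    apply Set.Subset.antisymm
    · simp [Form.sig, Set.insert_subset_iff, h₁]
    · simp [Form.sig, Set.insert_subset_iff, h₂]
  · rintro i M M' - ⟨-, hM'⟩ ⟨-, hb⟩ ⟨hr', hc⟩ τ ha - - l hl Z hZ
    obtain ⟨v', hv', hv'0, H⟩ := exists_common_bisimilar_leaf hM' ha hZ (fun _ => ∅)
      (fun _ => ∅) i 0 0 M'.root (by omega) rfl hr' hc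
    rw [Nat.zero_add] at hv' H
    choose w hw hwZ _ hws using fun n : ℕ => H M.root hZ.root rfl hb n.testBit
    refine ⟨fun n => w n, v', fun n => hw n, hv', fun n => hwZ n,
      fun n => (hZ.base (hwZ n) 0 ha).2 hv'0, hv'0, fun n k hnk => ?_⟩
    obtain ⟨m, hm⟩ : ∃ m, (n : ℕ).testBit m ≠ (k : ℕ).testBit m := by
      by_contra! h
      exact hnk (Fin.ext (Nat.eq_of_testBit_eq h))
    have hmi : m < i := by
      by_contra! h
      have hp : 2 ^ i ≤ 2 ^ m := Nat.pow_le_pow_right (by norm_num) h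
      exact hm (by rw [Nat.testBit_lt_two_pow (n.2.trans_le hp),
        Nat.testBit_lt_two_pow (k.2.trans_le hp)])
    refine ⟨m + 2, ⟨m, hmi, rfl⟩, fun h => hm ?_⟩
    rw [hws n m (by omega) (by omega), hws k m (by omega) (by omega)] at h
    exact Bool.eq_iff_iff.2 h
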